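/- arXiv:2105.12966 — 7 statements merged into one kernel-verified Lean document; each statement's English description precedes it below -/
import Mathlib

section
/- Let σ : ℂ be such that G(σ) and Wᵀ * G(σ) * V are invertible. If x1(σ) lies in the column span of V (i.e., there exists c : Fin r → ℂ with x1(σ) = V *ᵥ c), then the reduced-order transfer function interpolates the full-order one at σ: Ĥ1(σ) = H1(σ). -/
open Matrix
open scoped Kronecker

noncomputable section

/-- Kronecker product of vectors: `(u ⊗ v) (l, j) = u l * v j`. -/
def vkron {n : ℕ} (u v : Fin n → ℂ) : Fin n × Fin n → ℂ :=
  fun p => u p.1 * v p.2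

/-- The matrix pencil `G(s) = s • E - A`. -/
def Gm {n : ℕ} (E A : Matrix (Fin n) (Fin n) ℂ) (s : ℂ) : Matrix (Fin n) (Fin n) ℂ :=
  s • E - A

/-- Primal state of the first subsystem: `x1(s) = G(s)⁻¹ *ᵥ B`. -/
def x1 {n : ℕ} (E A : Matrix (Fin n) (Fin n) ℂ) (B : Fin n → ℂ) (s : ℂ) : Fin n → ℂ :=
  (Gm E A s)⁻¹ *ᵥ B

/-- First-order transfer function `H1(s) = C ⬝ᵥ x1(s)`. -/
def H1 {n : ℕ} (E A : Matrix (Fin n) (Fin n) ℂ) (B C : Fin n → ℂ) (s : ℂ) : ℂ :=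
  C ⬝ᵥ x1 E A B s

/-- Second-order input term `B₂(s1, s2)`. -/
def B2 {n : ℕ} (E A N : Matrix (Fin n) (Fin n) ℂ) (Q : Matrix (Fin n) (Fin n × Fin n) ℂ)
    (B : Fin n → ℂ) (s1 s2 : ℂ) : Fin n → ℂ :=
  Q *ᵥ vkron (x1 E A B s1) (x1 E A B s2) + (1/2 : ℂ) • (N *ᵥ (x1 E A B s1 + x1 E A B s2))

/-- Primal state of the second subsystem: `x2(s1, s2) = G(s1+s2)⁻¹ *ᵥ B₂(s1, s2)`. -/
def x2 {n : ℕ} (E A N : Matrix (Fin n) (Fin n) ℂ) (Q : Matrix (Fin n) (Fin n × Fin n) ℂ)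
    (B : Fin n → ℂ) (s1 s2 : ℂ) : Fin n → ℂ :=
  (Gm E A (s1 + s2))⁻¹ *ᵥ B2 E A N Q B s1 s2

/-- Second-order (symmetric) transfer function `H2(s1, s2) = C ⬝ᵥ x2(s1, s2)`. -/
def H2 {n : ℕ} (E A N : Matrix (Fin n) (Fin n) ℂ) (Q : Matrix (Fin n) (Fin n × Fin n) ℂ)
    (B C : Fin n → ℂ) (s1 s2 : ℂ) : ℂ :=
  C ⬝ᵥ x2 E A N Q B s1 s2

/-- Dual state of the first subsystem: `y1(s) = (G(s)ᵀ)⁻¹ *ᵥ C`. -/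
def y1 {n : ℕ} (E A : Matrix (Fin n) (Fin n) ℂ) (C : Fin n → ℂ) (s : ℂ) : Fin n → ℂ :=
  ((Gm E A s)ᵀ)⁻¹ *ᵥ C

/-- Mode-2 matricization: `Q⁽²⁾ j (l, i) = Q i (l, j)`. -/
def mode2 {n : ℕ} (Q : Matrix (Fin n) (Fin n × Fin n) ℂ) : Matrix (Fin n) (Fin n × Fin n) ℂ :=
  fun j p => Q p.2 (p.1, j)

/-- Dual output term `C₂(s1, s2)`. -/
def C2 {n : ℕ} (E A N : Matrix (Fin n) (Fin n) ℂ) (Q : Matrix (Fin n) (Fin n × Fin n) ℂ)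
    (B C : Fin n → ℂ) (s1 s2 : ℂ) : Fin n → ℂ :=
  mode2 Q *ᵥ vkron (x1 E A B s2) (y1 E A C (s1 + s2)) +
    (1/2 : ℂ) • (Nᵀ *ᵥ y1 E A C (s1 + s2))

/-- Dual state of the second subsystem: `y2(s1, s2) = (G(s1)ᵀ)⁻¹ *ᵥ C₂(s1, s2)`. -/
def y2 {n : ℕ} (E A N : Matrix (Fin n) (Fin n) ℂ) (Q : Matrix (Fin n) (Fin n × Fin n) ℂ)
    (B C : Fin n → ℂ) (s1 s2 : ℂ) : Fin n → ℂ :=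
  ((Gm E A s1)ᵀ)⁻¹ *ᵥ C2 E A N Q B C s1 s2

/-- `Q` is symmetric: `Q *ᵥ (u ⊗ v) = Q *ᵥ (v ⊗ u)` for all `u, v`. -/
def QSymm {n : ℕ} (Q : Matrix (Fin n) (Fin n × Fin n) ℂ) : Prop :=
  ∀ u v : Fin n → ℂ, Q *ᵥ vkron u v = Q *ᵥ vkron v u

/-- Euclidean (ℓ²) norm of a vector in `Fin n → ℂ`. -/
def vnorm {n : ℕ} (v : Fin n → ℂ) : ℝ := ‖(WithLp.equiv 2 (Fin n → ℂ)).symm v‖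

/-- ℓ²-induced operator norm of a square complex matrix. -/
def mnorm {n : ℕ} (M : Matrix (Fin n) (Fin n) ℂ) : ℝ := ‖Matrix.toEuclideanCLM (𝕜 := ℂ) M‖

section PetrovGalerkin

lemma mul_smul_sub_mul {k m p l R S : Type*} [Fintype m] [Fintype p]
    [NonUnitalNonAssocRing R] [Monoid S] [DistribMulAction S R] [IsScalarTower S R R]
    [SMulCommClass S R R] (L : Matrix k m R) (s : S) (E A : Matrix m p R) (V : Matrix p l R) :
    L * (s • E - A) * V = s • (L * E * V) - L * A * V := by
  rw [Matrix.mul_sub, Matrix.sub_mul, Matrix.mul_smul, Matrix.smul_mul]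

variable {m k R : Type*} [Fintype m] [DecidableEq m] [CommRing R]

lemma inv_mulVec_eq_iff {G : Matrix m m R} (hG : IsUnit G) {b x : m → R} :
    G⁻¹ *ᵥ b = x ↔ b = G *ᵥ x := by
  have : Invertible G := hG.invertible
  constructor
  · rintro rfl
    rw [mulVec_mulVec, mul_inv_of_invertible, one_mulVec]
  · exact inv_mulVec_eq_vec

variable [Fintype k] [DecidableEq k]

/-- Multiplying `b = G *ᵥ (V *ᵥ c)` by `L` shows that `c` solves the compressed system, whose
solution is unique. -/
lemma inv_compression_mulVec_eq_of_inv_mulVec_eq {G : Matrix m m R} {L : Matrix k m R}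
    {V : Matrix m k R} (hG : IsUnit G) (hLGV : IsUnit (L * G * V)) {b : m → R} {c : k → R}
    (hc : G⁻¹ *ᵥ b = V *ᵥ c) :
    (L * G * V)⁻¹ *ᵥ (L *ᵥ b) = c := by
  rw [inv_mulVec_eq_iff hLGV, (inv_mulVec_eq_iff hG).mp hc]
  simp only [mulVec_mulVec, Matrix.mul_assoc]

theorem reduced_H1_interpolation_primal_general (E A : Matrix m m R) (B C : m → R)
    (V W : Matrix m k R) (σ : R) (hG : IsUnit (σ • E - A))
    (hGr : IsUnit (Wᵀ * (σ • E - A) * V))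
    (hx : ∃ c : k → R, (σ • E - A)⁻¹ *ᵥ B = V *ᵥ c) :
    (Vᵀ *ᵥ C) ⬝ᵥ ((σ • (Wᵀ * E * V) - Wᵀ * A * V)⁻¹ *ᵥ (Wᵀ *ᵥ B)) =
      C ⬝ᵥ ((σ • E - A)⁻¹ *ᵥ B) := by
  obtain ⟨c, hc⟩ := hx
  calc (Vᵀ *ᵥ C) ⬝ᵥ ((σ • (Wᵀ * E * V) - Wᵀ * A * V)⁻¹ *ᵥ (Wᵀ *ᵥ B))
      = (Vᵀ *ᵥ C) ⬝ᵥ c := by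
        rw [← mul_smul_sub_mul, inv_compression_mulVec_eq_of_inv_mulVec_eq hG hGr hc]
    _ = C ⬝ᵥ (V *ᵥ c) := by rw [mulVec_transpose, dotProduct_mulVec]
    _ = C ⬝ᵥ ((σ • E - A)⁻¹ *ᵥ B) := by rw [hc]

end PetrovGalerkin

theorem reduced_H1_interpolation_primal {n r : ℕ}
    (E A N : Matrix (Fin n) (Fin n) ℂ) (Q : Matrix (Fin n) (Fin n × Fin n) ℂ)
    (B C : Fin n → ℂ) (V W : Matrix (Fin n) (Fin r) ℂ) (σ : ℂ)
    (hG : IsUnit (Gm E A σ)) (hGr : IsUnit (Wᵀ * Gm E A σ * V))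
    (hx : ∃ c : Fin r → ℂ, x1 E A B σ = V *ᵥ c) :
    H1 (Wᵀ * E * V) (Wᵀ * A * V) (Wᵀ *ᵥ B) (Vᵀ *ᵥ C) σ = H1 E A B C σ :=
  reduced_H1_interpolation_primal_general E A B C V W σ hG hGr hx
end
end

section
/- Let σ : ℂ be such that G(σ) and Wᵀ * G(σ) * V are invertible. If the dual vector y1(σ) = (G(σ)ᵀ)⁻¹ *ᵥ C lies in the column span of W (i.e., there exists d : Fin r → ℂ with y1(σ) = W *ᵥ d), then Ĥ1(σ) = H1(σ). -/
open Matrix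
open scoped Kronecker

noncomputable section

theorem Gm_mul_mul {n r : ℕ} (E A : Matrix (Fin n) (Fin n) ℂ) (U : Matrix (Fin r) (Fin n) ℂ)
    (V : Matrix (Fin n) (Fin r) ℂ) (s : ℂ) :
    Gm (U * E * V) (U * A * V) s = U * Gm E A s * V := by
  simp only [Gm, Matrix.mul_sub, Matrix.sub_mul, Matrix.mul_smul, Matrix.smul_mul]

theorem transpose_mul_mul_mulVec {R l m n k : Type*} [CommSemiring R] [Fintype l] [Fintype m]
    [Fintype n] (W : Matrix m l R) (G : Matrix m n R) (V : Matrix n k R) (d : l → R) :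
    (Wᵀ * G * V)ᵀ *ᵥ d = Vᵀ *ᵥ (Gᵀ *ᵥ (W *ᵥ d)) := by
  simp only [transpose_mul, transpose_transpose, mulVec_mulVec]

section Interpolation

variable {R m k : Type*} [CommRing R] [Fintype m] [DecidableEq m] [Fintype k] [DecidableEq k]

theorem transpose_mulVec_dotProduct_inv_mulVec {G : Matrix m m R} (hG : IsUnit G)
    (y b : m → R) : (Gᵀ *ᵥ y) ⬝ᵥ (G⁻¹ *ᵥ b) = y ⬝ᵥ b := by
  have hdet : IsUnit G.det := (isUnit_iff_isUnit_det G).mp hG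
  rw [mulVec_transpose, ← dotProduct_mulVec, mulVec_mulVec, mul_nonsing_inv G hdet, one_mulVec]

/- With `y = W *ᵥ d`, the dual equation `Gᵀ *ᵥ y = C` compresses to `(Wᵀ * G * V)ᵀ *ᵥ d = Vᵀ *ᵥ C`,
so `d` is the dual vector of the reduced system, and both sides pair the input with the dual vector:
`d ⬝ᵥ (Wᵀ *ᵥ B) = y ⬝ᵥ B`. -/
theorem reduced_H1_interpolation_dual_general {G : Matrix m m R} {V W : Matrix m k R}
    (B C : m → R) (hG : IsUnit G) (hGr : IsUnit (Wᵀ * G * V))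
    (hy : ∃ d : k → R, Gᵀ⁻¹ *ᵥ C = W *ᵥ d) :
    (Vᵀ *ᵥ C) ⬝ᵥ ((Wᵀ * G * V)⁻¹ *ᵥ (Wᵀ *ᵥ B)) = C ⬝ᵥ (G⁻¹ *ᵥ B) := by
  obtain ⟨d, hd⟩ := hy
  have hdet : IsUnit Gᵀ.det := isUnit_det_transpose G ((isUnit_iff_isUnit_det G).mp hG)
  have dual_eq : Gᵀ *ᵥ (W *ᵥ d) = C := by
    rw [← hd, mulVec_mulVec, mul_nonsing_inv Gᵀ hdet, one_mulVec]
  have reduced_dual_eq : (Wᵀ * G * V)ᵀ *ᵥ d = Vᵀ *ᵥ C := by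
    rw [transpose_mul_mul_mulVec, dual_eq]
  calc (Vᵀ *ᵥ C) ⬝ᵥ ((Wᵀ * G * V)⁻¹ *ᵥ (Wᵀ *ᵥ B))
      = d ⬝ᵥ (Wᵀ *ᵥ B) := by
        rw [← reduced_dual_eq, transpose_mulVec_dotProduct_inv_mulVec hGr]
    _ = (W *ᵥ d) ⬝ᵥ B := by rw [dotProduct_mulVec, vecMul_transpose]
    _ = C ⬝ᵥ (G⁻¹ *ᵥ B) := by
        rw [← transpose_mulVec_dotProduct_inv_mulVec hG, dual_eq]

end Interpolation

theorem reduced_H1_interpolation_dual {n r : ℕ}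
    (E A N : Matrix (Fin n) (Fin n) ℂ) (Q : Matrix (Fin n) (Fin n × Fin n) ℂ)
    (B C : Fin n → ℂ) (V W : Matrix (Fin n) (Fin r) ℂ) (σ : ℂ)
    (hG : IsUnit (Gm E A σ)) (hGr : IsUnit (Wᵀ * Gm E A σ * V))
    (hy : ∃ d : Fin r → ℂ, y1 E A C σ = W *ᵥ d) :
    H1 (Wᵀ * E * V) (Wᵀ * A * V) (Wᵀ *ᵥ B) (Vᵀ *ᵥ C) σ = H1 E A B C σ := by
  rw [H1, x1, Gm_mul_mul]
  exact reduced_H1_interpolation_dual_general B C hG hGr hy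
end
end

section
/- Let σ : ℂ be such that G(σ) and Wᵀ * G(σ) * V are invertible. If x1(σ) lies in the column span of V and y1(σ) = (G(σ)ᵀ)⁻¹ *ᵥ C lies in the column span of W, then the reduced-order model is a Hermite interpolant at σ: deriv H1 σ = deriv Ĥ1 σ (in addition to H1(σ) = Ĥ1(σ)). -/
open Matrix
open scoped Kronecker

noncomputable section

/-!
For any two points `s`, `t` of the resolvent set, the resolvent identity gives
`H(t) - H(s) = (s - t) * (y(t) ⬝ᵥ E *ᵥ x(s))`, where `x` and `y` are the primal and dual states, and
letting `t → s` yields `H'(s) = -(y(s) ⬝ᵥ E *ᵥ x(s))`. Petrov–Galerkin projection recovers every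
solution lying in the trial space: if `x(σ) = V *ᵥ u` and `y(σ) = W *ᵥ w`, then the reduced primal
and dual states at `σ` are `u` and `w`. Substituting them into the formulas for `H` and `H'` gives
the same numbers for the full and the reduced system.
-/

/-- The primal state `x(s) = (s E - A)⁻¹ b` of a linear descriptor system. It is `0` where the
pencil `s E - A` is singular, because the inverse of a singular matrix is `0` in Mathlib. -/
def primalState {R m : Type*} [CommRing R] [Fintype m] [DecidableEq m]
    (E A : Matrix m m R) (b : m → R) (s : R) : m → R :=
  (s • E - A)⁻¹ *ᵥ b

/-- The dual state `y(s) = (s E - A)⁻ᵀ c` of a linear descriptor system, with the same convention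
for singular pencils as `primalState`. -/
def dualState {R m : Type*} [CommRing R] [Fintype m] [DecidableEq m]
    (E A : Matrix m m R) (c : m → R) (s : R) : m → R :=
  ((s • E - A)ᵀ)⁻¹ *ᵥ c

/-- The transfer function `H(s) = cᵀ (s E - A)⁻¹ b` of a linear descriptor system; it agrees with
`H1` for complex systems indexed by `Fin n`. -/
def transferFunction {R m : Type*} [CommRing R] [Fintype m] [DecidableEq m]
    (E A : Matrix m m R) (b c : m → R) (s : R) : R :=
  c ⬝ᵥ primalState E A b s

section Projection

variable {R l m n k : Type*} [CommRing R] [Fintype m]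

theorem smul_projected_sub_projected [Fintype n] (E A : Matrix m n R) (P : Matrix l m R)
    (V : Matrix n k R) (s : R) : s • (P * E * V) - P * A * V = P * (s • E - A) * V := by
  simp [Matrix.mul_sub, Matrix.sub_mul]

theorem mulVec_dotProduct_mulVec_mulVec [Fintype l] [Fintype n] [Fintype k] (M : Matrix m n R)
    (V : Matrix n k R) (W : Matrix m l R) (u : k → R) (w : l → R) :
    W *ᵥ w ⬝ᵥ M *ᵥ V *ᵥ u = w ⬝ᵥ (Wᵀ * M * V) *ᵥ u := by
  rw [← mulVec_mulVec, ← mulVec_mulVec, dotProduct_mulVec w, vecMul_transpose]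

variable [Fintype k] [DecidableEq m] [DecidableEq k]

theorem projected_inv_mulVec_eq {M : Matrix m m R} {P : Matrix k m R} {V : Matrix m k R}
    {b : m → R} {u : k → R} (hM : IsUnit M) (hPMV : IsUnit (P * M * V))
    (hu : M⁻¹ *ᵥ b = V *ᵥ u) : (P * M * V)⁻¹ *ᵥ P *ᵥ b = u := by
  have := hM.invertible
  have := hPMV.invertible
  have hb : M *ᵥ V *ᵥ u = b := by rw [← hu, mulVec_mulVec, mul_inv_of_invertible, one_mulVec]
  exact inv_mulVec_eq_vec (by rw [← hb]; simp only [mulVec_mulVec, Matrix.mul_assoc])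

variable {E A : Matrix m m R} {s : R} {u : k → R}

theorem primalState_projected {P : Matrix k m R} {V : Matrix m k R} {b : m → R}
    (hG : IsUnit (s • E - A)) (hGr : IsUnit (P * (s • E - A) * V))
    (hu : primalState E A b s = V *ᵥ u) :
    primalState (P * E * V) (P * A * V) (P *ᵥ b) s = u := by
  rw [primalState, smul_projected_sub_projected]
  exact projected_inv_mulVec_eq hG hGr hu

theorem dualState_projected {V W : Matrix m k R} {c : m → R}
    (hG : IsUnit (s • E - A)) (hGr : IsUnit (Wᵀ * (s • E - A) * V))
    (hu : dualState E A c s = W *ᵥ u) :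
    dualState (Wᵀ * E * V) (Wᵀ * A * V) (Vᵀ *ᵥ c) s = u := by
  have h_transpose : (Wᵀ * (s • E - A) * V)ᵀ = Vᵀ * (s • E - A)ᵀ * W := by
    simp only [transpose_mul, transpose_transpose, Matrix.mul_assoc]
  rw [dualState, smul_projected_sub_projected, h_transpose]
  exact projected_inv_mulVec_eq ((isUnit_transpose _).2 hG)
    (h_transpose ▸ (isUnit_transpose _).2 hGr) hu

theorem transferFunction_projected {P : Matrix k m R} {V : Matrix m k R} {b : m → R} (c : m → R)
    (hG : IsUnit (s • E - A)) (hGr : IsUnit (P * (s • E - A) * V))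
    (hu : primalState E A b s = V *ᵥ u) :
    transferFunction (P * E * V) (P * A * V) (P *ᵥ b) (Vᵀ *ᵥ c) s = transferFunction E A b c s := by
  rw [transferFunction, transferFunction, primalState_projected hG hGr hu, hu, mulVec_transpose,
    dotProduct_mulVec]

end Projection

theorem transferFunction_sub_transferFunction {R m : Type*} [CommRing R] [Fintype m]
    [DecidableEq m] {E A : Matrix m m R} (b c : m → R) {s t : R}
    (h : IsUnit (t • E - A) ↔ IsUnit (s • E - A)) :
    transferFunction E A b c t - transferFunction E A b c s =
      (s - t) * (dualState E A c t ⬝ᵥ E *ᵥ primalState E A b s) := by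
  have h_pencil : (s • E - A) - (t • E - A) = (s - t) • E := by rw [sub_smul]; abel
  calc transferFunction E A b c t - transferFunction E A b c s
      = c ⬝ᵥ ((t • E - A)⁻¹ - (s • E - A)⁻¹) *ᵥ b := by
        rw [transferFunction, transferFunction, primalState, primalState, sub_mulVec,
          dotProduct_sub]
    _ = (s - t) * (c ⬝ᵥ (t • E - A)⁻¹ *ᵥ E *ᵥ (s • E - A)⁻¹ *ᵥ b) := by
        rw [Matrix.inv_sub_inv h, h_pencil, Matrix.mul_smul, Matrix.smul_mul, smul_mulVec,
          dotProduct_smul, smul_eq_mul, ← mulVec_mulVec, ← mulVec_mulVec]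
    _ = (s - t) * (dualState E A c t ⬝ᵥ E *ᵥ primalState E A b s) := by
        rw [dualState, primalState, ← transpose_nonsing_inv, mulVec_transpose, dotProduct_mulVec]

section Topology

open Filter Topology

variable {𝕜 m : Type*} [Fintype m] [DecidableEq m]

theorem eventually_isUnit_smul_sub [Field 𝕜] [TopologicalSpace 𝕜] [IsTopologicalRing 𝕜]
    [T1Space 𝕜] {E A : Matrix m m 𝕜} {s : 𝕜} (hG : IsUnit (s • E - A)) :
    ∀ᶠ t in 𝓝 s, IsUnit (t • E - A) := by
  have h_cont : Continuous fun t : 𝕜 => (t • E - A).det := by fun_prop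
  simp only [isUnit_iff_isUnit_det, isUnit_iff_ne_zero] at hG ⊢
  exact h_cont.continuousAt.eventually_ne hG

theorem continuousAt_dualState [Field 𝕜] [TopologicalSpace 𝕜] [IsTopologicalDivisionRing 𝕜]
    {E A : Matrix m m 𝕜} {s : 𝕜} (c : m → 𝕜) (hG : IsUnit (s • E - A)) :
    ContinuousAt (dualState E A c) s := by
  have h_det : (s • E - A)ᵀ.det ≠ 0 := by
    rwa [det_transpose, ← isUnit_iff_ne_zero, ← isUnit_iff_isUnit_det]
  have h_inv : ContinuousAt Inv.inv (s • E - A)ᵀ :=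
    continuousAt_matrix_inv _ (by simpa only [Ring.inverse_eq_inv'] using continuousAt_inv₀ h_det)
  have h_pencil : Continuous fun t : 𝕜 => (t • E - A)ᵀ := by fun_prop
  have h_mulVec : Continuous fun M : Matrix m m 𝕜 => M *ᵥ c := by fun_prop
  exact h_mulVec.continuousAt.comp (h_inv.comp_of_eq h_pencil.continuousAt rfl)

theorem hasDerivAt_transferFunction [NontriviallyNormedField 𝕜] {E A : Matrix m m 𝕜} {s : 𝕜}
    (b c : m → 𝕜) (hG : IsUnit (s • E - A)) :
    HasDerivAt (transferFunction E A b c)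
      (-(dualState E A c s ⬝ᵥ E *ᵥ primalState E A b s)) s := by
  have h_slope : ∀ᶠ t in 𝓝[≠] s, -(dualState E A c t ⬝ᵥ E *ᵥ primalState E A b s) =
      slope (transferFunction E A b c) s t := by
    filter_upwards [self_mem_nhdsWithin, (eventually_isUnit_smul_sub hG).filter_mono inf_le_left]
      with t hts hGt
    rw [slope_def_field, transferFunction_sub_transferFunction b c (iff_of_true hGt hG),
      eq_div_iff (sub_ne_zero.2 hts)]
    ring
  have h_dotProduct : Continuous fun y : m → 𝕜 => -(y ⬝ᵥ E *ᵥ primalState E A b s) := by fun_prop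
  have h_tendsto := h_dotProduct.continuousAt.comp (continuousAt_dualState c hG)
  exact hasDerivAt_iff_tendsto_slope.2 ((h_tendsto.mono_left inf_le_left).congr' h_slope)

end Topology

theorem reduced_H1_hermite_interpolation_general {𝕜 m k : Type*} [NontriviallyNormedField 𝕜]
    [Fintype m] [DecidableEq m] [Fintype k] [DecidableEq k]
    (E A : Matrix m m 𝕜) (B C : m → 𝕜) (V W : Matrix m k 𝕜) (σ : 𝕜)
    (hG : IsUnit (σ • E - A)) (hGr : IsUnit (Wᵀ * (σ • E - A) * V))
    (hx : ∃ u : k → 𝕜, primalState E A B σ = V *ᵥ u)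
    (hy : ∃ w : k → 𝕜, dualState E A C σ = W *ᵥ w) :
    transferFunction E A B C σ =
      transferFunction (Wᵀ * E * V) (Wᵀ * A * V) (Wᵀ *ᵥ B) (Vᵀ *ᵥ C) σ ∧
    deriv (transferFunction E A B C) σ =
      deriv (transferFunction (Wᵀ * E * V) (Wᵀ * A * V) (Wᵀ *ᵥ B) (Vᵀ *ᵥ C)) σ := by
  obtain ⟨u, hu⟩ := hx
  obtain ⟨w, hw⟩ := hy
  have hGr' : IsUnit (σ • (Wᵀ * E * V) - Wᵀ * A * V) := by rwa [smul_projected_sub_projected]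
  refine ⟨(transferFunction_projected C hG hGr hu).symm, ?_⟩
  rw [(hasDerivAt_transferFunction B C hG).deriv, (hasDerivAt_transferFunction _ _ hGr').deriv,
    primalState_projected hG hGr hu, dualState_projected hG hGr hw, hu, hw,
    mulVec_dotProduct_mulVec_mulVec]

theorem reduced_H1_hermite_interpolation {n r : ℕ}
    (E A N : Matrix (Fin n) (Fin n) ℂ) (Q : Matrix (Fin n) (Fin n × Fin n) ℂ)
    (B C : Fin n → ℂ) (V W : Matrix (Fin n) (Fin r) ℂ) (σ : ℂ)
    (hG : IsUnit (Gm E A σ)) (hGr : IsUnit (Wᵀ * Gm E A σ * V))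
    (hx : ∃ c : Fin r → ℂ, x1 E A B σ = V *ᵥ c)
    (hy : ∃ d : Fin r → ℂ, y1 E A C σ = W *ᵥ d) :
    H1 E A B C σ = H1 (Wᵀ * E * V) (Wᵀ * A * V) (Wᵀ *ᵥ B) (Vᵀ *ᵥ C) σ ∧
    deriv (fun s => H1 E A B C s) σ =
      deriv (fun s => H1 (Wᵀ * E * V) (Wᵀ * A * V) (Wᵀ *ᵥ B) (Vᵀ *ᵥ C) s) σ :=
  reduced_H1_hermite_interpolation_general E A B C V W σ hG hGr hx hy
end
end

section
/- Let σ1, σ2 : ℂ be such that G(σ1), G(σ2), G(σ1+σ2) and Wᵀ * G(σ1) * V, Wᵀ * G(σ2) * V, Wᵀ * G(σ1+σ2) * V are invertible. If x1(σ1), x1(σ2) and x2(σ1, σ2) all lie in the column span of V, then the reduced second-order transfer function interpolates the full one: Ĥ2(σ1, σ2) = H2(σ1, σ2). -/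
open Matrix
open scoped Kronecker

noncomputable section

/-!
Whenever `P * G * V` is invertible, `V * (P * G * V)⁻¹ * P * G` is a projector onto the column span
of `V`; hence a Petrov-Galerkin projection of the system `G x = b` recovers its solution exactly as
soon as that solution lies in this span. Applied to `x1` at both frequencies, this makes the reduced
input term equal to `Wᵀ *ᵥ B₂(σ1, σ2)`; so the reduced second-order state is the projection of
`G(σ1 + σ2) x = B₂(σ1, σ2)`, and the same argument recovers `x2`, hence `H2`.
-/

theorem petrovGalerkin_eq_self_of_mem_colSpan {k m n R : Type*} [Fintype k] [DecidableEq k]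
    [Fintype m] [Fintype n] [CommRing R] {P : Matrix k m R} {G : Matrix m n R} {V : Matrix n k R}
    {x : n → R} (hPGV : IsUnit (P * G * V)) (hx : ∃ c, x = V *ᵥ c) :
    V *ᵥ ((P * G * V)⁻¹ *ᵥ (P *ᵥ (G *ᵥ x))) = x := by
  obtain ⟨c, rfl⟩ := hx
  have hc : P *ᵥ (G *ᵥ (V *ᵥ c)) = (P * G * V) *ᵥ c := by
    simp only [mulVec_mulVec, Matrix.mul_assoc]
  rw [hc, mulVec_mulVec (M := (P * G * V)⁻¹),
    nonsing_inv_mul _ ((isUnit_iff_isUnit_det _).mp hPGV), one_mulVec]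

theorem kronecker_mulVec_vec_vecMulVec {k l m n R : Type*} [Fintype l] [Fintype n]
    [CommSemiring R] (U : Matrix k l R) (V : Matrix m n R) (u : l → R) (v : n → R) :
    (U ⊗ₖ V) *ᵥ vec (vecMulVec v u) = vec (vecMulVec (V *ᵥ v) (U *ᵥ u)) := by
  rw [kronecker_mulVec_vec, mul_vecMulVec, vecMulVec_mul, vecMul_transpose]

theorem vkron_eq_vec_vecMulVec {n : ℕ} (u v : Fin n → ℂ) : vkron u v = vec (vecMulVec v u) :=
  funext fun _ => mul_comm _ _

theorem kronecker_mulVec_vkron {n r : ℕ} (U V : Matrix (Fin n) (Fin r) ℂ) (u v : Fin r → ℂ) :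
    (U ⊗ₖ V) *ᵥ vkron u v = vkron (U *ᵥ u) (V *ᵥ v) := by
  simp only [vkron_eq_vec_vecMulVec, kronecker_mulVec_vec_vecMulVec]

theorem x2_eq_x1_B2 {n : ℕ} (E A N : Matrix (Fin n) (Fin n) ℂ)
    (Q : Matrix (Fin n) (Fin n × Fin n) ℂ) (B : Fin n → ℂ) (s1 s2 : ℂ) :
    x2 E A N Q B s1 s2 = x1 E A (B2 E A N Q B s1 s2) (s1 + s2) :=
  rfl

section Reduction

variable {n r : ℕ} {E A N : Matrix (Fin n) (Fin n) ℂ} {Q : Matrix (Fin n) (Fin n × Fin n) ℂ}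
  {B : Fin n → ℂ} {P : Matrix (Fin r) (Fin n) ℂ} {V : Matrix (Fin n) (Fin r) ℂ}

theorem Gm_mulVec_x1 {s : ℂ} (hG : IsUnit (Gm E A s)) : Gm E A s *ᵥ x1 E A B s = B := by
  rw [x1, mulVec_mulVec, mul_nonsing_inv _ ((isUnit_iff_isUnit_det _).mp hG), one_mulVec]

theorem Gm_reduced (s : ℂ) : Gm (P * E * V) (P * A * V) s = P * Gm E A s * V := by
  simp only [Gm, Matrix.mul_sub, Matrix.sub_mul, Matrix.mul_smul, Matrix.smul_mul]

theorem mulVec_x1_reduced {s : ℂ} (hG : IsUnit (Gm E A s)) (hGr : IsUnit (P * Gm E A s * V))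
    (hx : ∃ c, x1 E A B s = V *ᵥ c) :
    V *ᵥ x1 (P * E * V) (P * A * V) (P *ᵥ B) s = x1 E A B s := by
  have h := petrovGalerkin_eq_self_of_mem_colSpan hGr hx
  rwa [Gm_mulVec_x1 hG, ← Gm_reduced] at h

theorem B2_reduced {s1 s2 : ℂ}
    (h1 : V *ᵥ x1 (P * E * V) (P * A * V) (P *ᵥ B) s1 = x1 E A B s1)
    (h2 : V *ᵥ x1 (P * E * V) (P * A * V) (P *ᵥ B) s2 = x1 E A B s2) :
    B2 (P * E * V) (P * A * V) (P * N * V) (P * Q * (V ⊗ₖ V)) (P *ᵥ B) s1 s2 =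
      P *ᵥ B2 E A N Q B s1 s2 := by
  simp only [B2, ← mulVec_mulVec, kronecker_mulVec_vkron, mulVec_add, mulVec_smul, h1, h2]

theorem mulVec_x2_reduced {s1 s2 : ℂ} (hG : IsUnit (Gm E A (s1 + s2)))
    (hGr : IsUnit (P * Gm E A (s1 + s2) * V))
    (h1 : V *ᵥ x1 (P * E * V) (P * A * V) (P *ᵥ B) s1 = x1 E A B s1)
    (h2 : V *ᵥ x1 (P * E * V) (P * A * V) (P *ᵥ B) s2 = x1 E A B s2)
    (hx : ∃ c, x2 E A N Q B s1 s2 = V *ᵥ c) :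
    V *ᵥ x2 (P * E * V) (P * A * V) (P * N * V) (P * Q * (V ⊗ₖ V)) (P *ᵥ B) s1 s2 =
      x2 E A N Q B s1 s2 := by
  rw [x2_eq_x1_B2] at hx
  rw [x2_eq_x1_B2, x2_eq_x1_B2, B2_reduced h1 h2, mulVec_x1_reduced hG hGr hx]

end Reduction

theorem reduced_H2_interpolation_primal {n r : ℕ}
    (E A N : Matrix (Fin n) (Fin n) ℂ) (Q : Matrix (Fin n) (Fin n × Fin n) ℂ)
    (B C : Fin n → ℂ) (V W : Matrix (Fin n) (Fin r) ℂ) (σ1 σ2 : ℂ)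
    (hG1 : IsUnit (Gm E A σ1)) (hG2 : IsUnit (Gm E A σ2))
    (hG12 : IsUnit (Gm E A (σ1 + σ2)))
    (hGr1 : IsUnit (Wᵀ * Gm E A σ1 * V)) (hGr2 : IsUnit (Wᵀ * Gm E A σ2 * V))
    (hGr12 : IsUnit (Wᵀ * Gm E A (σ1 + σ2) * V))
    (hx1 : ∃ c : Fin r → ℂ, x1 E A B σ1 = V *ᵥ c)
    (hx2 : ∃ c : Fin r → ℂ, x1 E A B σ2 = V *ᵥ c)
    (hx12 : ∃ c : Fin r → ℂ, x2 E A N Q B σ1 σ2 = V *ᵥ c) :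
    H2 (Wᵀ * E * V) (Wᵀ * A * V) (Wᵀ * N * V) (Wᵀ * Q * (V ⊗ₖ V))
        (Wᵀ *ᵥ B) (Vᵀ *ᵥ C) σ1 σ2 = H2 E A N Q B C σ1 σ2 := by
  have h1 := mulVec_x1_reduced hG1 hGr1 hx1
  have h2 := mulVec_x1_reduced hG2 hGr2 hx2
  rw [H2, H2, ← mulVec_x2_reduced hG12 hGr12 h1 h2 hx12, dotProduct_comm,
    dotProduct_transpose_mulVec]
end
end

section
/- Let σ1, σ2 : ℂ be such that G(σ1), G(σ2), G(σ1+σ2) and Wᵀ * G(σ1) * V, Wᵀ * G(σ2) * V, Wᵀ * G(σ1+σ2) * V are invertible. If x1(σ1) and x1(σ2) lie in the column span of V and the dual vector y1(σ1+σ2) = (G(σ1+σ2)ᵀ)⁻¹ *ᵥ C lies in the column span of W, then Ĥ2(σ1, σ2) = H2(σ1, σ2). -/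
open Matrix
open scoped Kronecker

noncomputable section

/-!
A state `x = G⁻¹ b` lying in the range of `V` is reproduced exactly by Petrov–Galerkin projection:
if `x = V d`, then `d` solves the projected system `(Wᵀ G V) d = Wᵀ b`. Transposing exchanges `V`
and `W`, so if the adjoint state `(Gᵀ)⁻¹ c` lies in the range of `W`, the projected output
functional agrees with `b ↦ c ⬝ᵥ G⁻¹ b` on *every* input `b`. The primal statement at `σ1` and `σ2`
identifies the reduced second-order input with `Wᵀ B₂(σ1, σ2)`, and the dual statement at
`σ1 + σ2` then gives equality of the outputs, although `x2(σ1, σ2)` need not lie in the range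
of `V`.
-/

section PetrovGalerkin

variable {R ι κ : Type*} [CommRing R] [Fintype ι] [DecidableEq ι] [Fintype κ] [DecidableEq κ]

theorem dotProduct_inv_mulVec (G : Matrix ι ι R) (b c : ι → R) :
    c ⬝ᵥ (G⁻¹ *ᵥ b) = (Gᵀ⁻¹ *ᵥ c) ⬝ᵥ b := by
  rw [← transpose_nonsing_inv, mulVec_transpose, dotProduct_mulVec]

theorem mulVec_inv_projection_mulVec {G : Matrix ι ι R} {V W : Matrix ι κ R} {b : ι → R}
    (hG : IsUnit G) (hGr : IsUnit (Wᵀ * G * V)) (hx : ∃ d, G⁻¹ *ᵥ b = V *ᵥ d) :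
    V *ᵥ ((Wᵀ * G * V)⁻¹ *ᵥ (Wᵀ *ᵥ b)) = G⁻¹ *ᵥ b := by
  obtain ⟨d, hd⟩ := hx
  have := hG.invertible
  have := hGr.invertible
  have hb : b = G *ᵥ (V *ᵥ d) := by
    rw [← hd, mulVec_mulVec, mul_inv_of_invertible, one_mulVec]
  have hWb : Wᵀ *ᵥ b = (Wᵀ * G * V) *ᵥ d := by
    rw [hb, mulVec_mulVec, mulVec_mulVec, Matrix.mul_assoc]
  rw [inv_mulVec_eq_vec hWb, hd]

theorem dotProduct_inv_projection_mulVec {G : Matrix ι ι R} {V W : Matrix ι κ R} {c : ι → R}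
    (hG : IsUnit G) (hGr : IsUnit (Wᵀ * G * V)) (hy : ∃ d, Gᵀ⁻¹ *ᵥ c = W *ᵥ d) (b : ι → R) :
    (Vᵀ *ᵥ c) ⬝ᵥ ((Wᵀ * G * V)⁻¹ *ᵥ (Wᵀ *ᵥ b)) = c ⬝ᵥ (G⁻¹ *ᵥ b) := by
  have transpose_projection : (Wᵀ * G * V)ᵀ = Vᵀ * Gᵀ * W := by
    simp only [transpose_mul, transpose_transpose, Matrix.mul_assoc]
  have adjoint_state : W *ᵥ ((Vᵀ * Gᵀ * W)⁻¹ *ᵥ (Vᵀ *ᵥ c)) = Gᵀ⁻¹ *ᵥ c :=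
    mulVec_inv_projection_mulVec ((isUnit_transpose _).2 hG)
      (transpose_projection ▸ (isUnit_transpose _).2 hGr) hy
  rw [dotProduct_inv_mulVec, transpose_projection, dotProduct_mulVec, vecMul_transpose,
    adjoint_state, ← dotProduct_inv_mulVec]

end PetrovGalerkin

section QuadraticBilinear

variable {R ι κ : Type*} [CommRing R] [Fintype ι] [Fintype κ]

theorem kronecker_mulVec_vec_vecMulVec_s4 {ι' κ' : Type*} (M : Matrix ι' ι R) (P : Matrix κ' κ R)
    (u : ι → R) (v : κ → R) :
    (M ⊗ₖ P) *ᵥ vec (vecMulVec v u) = vec (vecMulVec (P *ᵥ v) (M *ᵥ u)) := by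
  rw [kronecker_mulVec_vec, mul_vecMulVec, vecMulVec_mul, vecMul_transpose]

/-- The quadratic-bilinear input `Q (u ⊗ v) + a • N (u + v)` produced by two states `u` and `v`.
The vector `u ⊗ v` is encoded as the column-stacking `vec` of the rank-one matrix `v uᵀ`. -/
def quadBilinInput (N : Matrix ι ι R) (Q : Matrix ι (ι × ι) R) (a : R) (u v : ι → R) : ι → R :=
  Q *ᵥ vec (vecMulVec v u) + a • (N *ᵥ (u + v))

theorem quadBilinInput_projection (N : Matrix ι ι R) (Q : Matrix ι (ι × ι) R) (a : R)
    (V W : Matrix ι κ R) (u v : κ → R) :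
    quadBilinInput (Wᵀ * N * V) (Wᵀ * Q * (V ⊗ₖ V)) a u v =
      Wᵀ *ᵥ quadBilinInput N Q a (V *ᵥ u) (V *ᵥ v) := by
  simp only [quadBilinInput, ← mulVec_mulVec, kronecker_mulVec_vec_vecMulVec_s4, mulVec_add,
    mulVec_smul]

variable [DecidableEq ι] [DecidableEq κ]

/-- The second-order transfer function of a quadratic-bilinear system with input vector `b` and
output vector `c`. The three evaluations `G(s1)`, `G(s2)`, `G(s1 + s2)` of the pencil are replaced
by independent matrices `G₁`, `G₂`, `G₁₂`, and the weight `1/2` by a scalar `a`. -/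
def secondOrderTransfer (G₁ G₂ G₁₂ N : Matrix ι ι R) (Q : Matrix ι (ι × ι) R) (a : R)
    (b c : ι → R) : R :=
  c ⬝ᵥ (G₁₂⁻¹ *ᵥ quadBilinInput N Q a (G₁⁻¹ *ᵥ b) (G₂⁻¹ *ᵥ b))

theorem reduced_H2_interpolation_mixed_general {G₁ G₂ G₁₂ : Matrix ι ι R} (N : Matrix ι ι R)
    (Q : Matrix ι (ι × ι) R) (a : R) {b c : ι → R} {V W : Matrix ι κ R}
    (hG₁ : IsUnit G₁) (hG₂ : IsUnit G₂) (hG₁₂ : IsUnit G₁₂)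
    (hGr₁ : IsUnit (Wᵀ * G₁ * V)) (hGr₂ : IsUnit (Wᵀ * G₂ * V)) (hGr₁₂ : IsUnit (Wᵀ * G₁₂ * V))
    (hx₁ : ∃ d, G₁⁻¹ *ᵥ b = V *ᵥ d) (hx₂ : ∃ d, G₂⁻¹ *ᵥ b = V *ᵥ d)
    (hy₁₂ : ∃ d, G₁₂ᵀ⁻¹ *ᵥ c = W *ᵥ d) :
    secondOrderTransfer (Wᵀ * G₁ * V) (Wᵀ * G₂ * V) (Wᵀ * G₁₂ * V) (Wᵀ * N * V)
        (Wᵀ * Q * (V ⊗ₖ V)) a (Wᵀ *ᵥ b) (Vᵀ *ᵥ c) =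
      secondOrderTransfer G₁ G₂ G₁₂ N Q a b c := by
  rw [secondOrderTransfer, quadBilinInput_projection, mulVec_inv_projection_mulVec hG₁ hGr₁ hx₁,
    mulVec_inv_projection_mulVec hG₂ hGr₂ hx₂, dotProduct_inv_projection_mulVec hG₁₂ hGr₁₂ hy₁₂,
    secondOrderTransfer]

end QuadraticBilinear

theorem Gm_projection {n r : ℕ} (E A : Matrix (Fin n) (Fin n) ℂ) (V W : Matrix (Fin n) (Fin r) ℂ)
    (s : ℂ) : Gm (Wᵀ * E * V) (Wᵀ * A * V) s = Wᵀ * Gm E A s * V := by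
  simp only [Gm, Matrix.mul_sub, Matrix.sub_mul, Matrix.mul_smul, Matrix.smul_mul]

theorem H2_eq_secondOrderTransfer {n : ℕ} (E A N : Matrix (Fin n) (Fin n) ℂ)
    (Q : Matrix (Fin n) (Fin n × Fin n) ℂ) (B C : Fin n → ℂ) (s1 s2 : ℂ) :
    H2 E A N Q B C s1 s2 =
      secondOrderTransfer (Gm E A s1) (Gm E A s2) (Gm E A (s1 + s2)) N Q (1 / 2) B C := by
  simp only [H2, x2, B2, x1, vkron_eq_vec_vecMulVec, secondOrderTransfer, quadBilinInput]

theorem reduced_H2_interpolation_mixed {n r : ℕ}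
    (E A N : Matrix (Fin n) (Fin n) ℂ) (Q : Matrix (Fin n) (Fin n × Fin n) ℂ)
    (B C : Fin n → ℂ) (V W : Matrix (Fin n) (Fin r) ℂ) (σ1 σ2 : ℂ)
    (hG1 : IsUnit (Gm E A σ1)) (hG2 : IsUnit (Gm E A σ2))
    (hG12 : IsUnit (Gm E A (σ1 + σ2)))
    (hGr1 : IsUnit (Wᵀ * Gm E A σ1 * V)) (hGr2 : IsUnit (Wᵀ * Gm E A σ2 * V))
    (hGr12 : IsUnit (Wᵀ * Gm E A (σ1 + σ2) * V))
    (hx1 : ∃ c : Fin r → ℂ, x1 E A B σ1 = V *ᵥ c)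
    (hx2 : ∃ c : Fin r → ℂ, x1 E A B σ2 = V *ᵥ c)
    (hy12 : ∃ d : Fin r → ℂ, y1 E A C (σ1 + σ2) = W *ᵥ d) :
    H2 (Wᵀ * E * V) (Wᵀ * A * V) (Wᵀ * N * V) (Wᵀ * Q * (V ⊗ₖ V))
        (Wᵀ *ᵥ B) (Vᵀ *ᵥ C) σ1 σ2 = H2 E A N Q B C σ1 σ2 := by
  simpa only [H2_eq_secondOrderTransfer, Gm_projection] using
    reduced_H2_interpolation_mixed_general N Q (1 / 2) hG1 hG2 hG12 hGr1 hGr2 hGr12 hx1 hx2 hy12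
end
end

section
/- (Formula (12).) Assume Q is symmetric and let s1, s2 : ℂ be such that G(s1), G(s2) and G(s1+s2) are invertible. Then the partial derivative of the second-order transfer function with respect to its first variable satisfies deriv (fun s => H2(s, s2)) s1 = -(y1(s1+s2) ⬝ᵥ (E *ᵥ x2(s1, s2))) - (x1(s1) ⬝ᵥ (Eᵀ *ᵥ y2(s1, s2))). -/
open Matrix
open scoped Kronecker

noncomputable section

/-!
Differentiating the linear systems `G(s) x₁(s) = B` and `G(s + s₂) x₂ = B₂` shows that
`x₁' = -G(s)⁻¹ E x₁` and that `∂₁H₂` is the pairing of `y₁(s + s₂)` with `∂₁B₂ - E x₂`.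
For symmetric `Q` the linear map `u ↦ Q (u ⊗ x₁(s₂)) + ½ N u`, which sends `x₁'` to `∂₁B₂`, is the
transpose of the map sending `y₁(s + s₂)` to `C₂`, so `y₁ ⬝ᵥ ∂₁B₂ = x₁' ⬝ᵥ C₂`; moving `G(s)⁻¹ E`
to the other side of this pairing produces `Eᵀ y₂`.
-/

section MatrixCalculus

variable {𝕜 l m : Type*} [NontriviallyNormedField 𝕜]

theorem hasDerivAt_matrix_iff [Finite l] [Finite m] {M : 𝕜 → Matrix l m 𝕜}
    {M' : Matrix l m 𝕜} {s : 𝕜} :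
    HasDerivAt M M' s ↔ ∀ i j, HasDerivAt (fun t => M t i j) (M' i j) s := by
  cases nonempty_fintype l
  cases nonempty_fintype m
  exact hasDerivAt_pi.trans (forall_congr' fun _ => hasDerivAt_pi)

variable [Fintype m]

theorem hasDerivAt_mulVec [Finite l] {M : 𝕜 → Matrix l m 𝕜} {M' : Matrix l m 𝕜}
    {v : 𝕜 → m → 𝕜} {v' : m → 𝕜} {s : 𝕜}
    (hM : HasDerivAt M M' s) (hv : HasDerivAt v v' s) :
    HasDerivAt (fun t => M t *ᵥ v t) (M' *ᵥ v s + M s *ᵥ v') s := by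
  cases nonempty_fintype l
  refine hasDerivAt_pi.2 fun i => ?_
  simp only [mulVec, dotProduct, Pi.add_apply, ← Finset.sum_add_distrib]
  exact HasDerivAt.fun_sum fun j _ =>
    (hasDerivAt_matrix_iff.1 hM i j).mul (hasDerivAt_pi.1 hv j)

theorem hasDerivAt_const_dotProduct (c : m → 𝕜) {v : 𝕜 → m → 𝕜} {v' : m → 𝕜} {s : 𝕜}
    (hv : HasDerivAt v v' s) : HasDerivAt (fun t => c ⬝ᵥ v t) (c ⬝ᵥ v') s :=
  HasDerivAt.fun_sum fun i _ => (hasDerivAt_pi.1 hv i).const_mul (c i)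

theorem hasDerivAt_const_mulVec [Finite l] (M : Matrix l m 𝕜)
    {v : 𝕜 → m → 𝕜} {v' : m → 𝕜} {s : 𝕜} (hv : HasDerivAt v v' s) :
    HasDerivAt (fun t => M *ᵥ v t) (M *ᵥ v') s := by
  cases nonempty_fintype l
  exact hasDerivAt_pi.2 fun i => hasDerivAt_const_dotProduct (M i) hv

variable [CompleteSpace 𝕜] [DecidableEq m] {M : 𝕜 → Matrix m m 𝕜} {M' : Matrix m m 𝕜} {s : 𝕜}

attribute [local instance] Matrix.linftyOpNormedRing Matrix.linftyOpNormedAlgebra in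
theorem hasDerivAt_nonsing_inv (hM : HasDerivAt M M' s) (hs : IsUnit (M s)) :
    HasDerivAt (fun t => (M t)⁻¹) (-((M s)⁻¹ * M' * (M s)⁻¹)) s := by
  -- Operator norms make matrices a normed ring with the entrywise topology, but with a uniformity
  -- of their own, in which completeness has to be established.
  have : @CompleteSpace (Matrix m m 𝕜) PseudoMetricSpace.toUniformSpace :=
    FiniteDimensional.complete 𝕜 _
  obtain ⟨u, hu⟩ := hs
  have hinv := hasFDerivAt_ringInverse (𝕜 := 𝕜) u
  rw [hu] at hinv
  have hcomp := hinv.comp_hasDerivAt s hM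
  simp only [Function.comp_def, ← nonsing_inv_eq_ringInverse, coe_units_inv, hu] at hcomp
  exact hcomp

theorem hasDerivAt_nonsing_inv_mulVec {v : 𝕜 → m → 𝕜} {v' : m → 𝕜}
    (hM : HasDerivAt M M' s) (hs : IsUnit (M s)) (hv : HasDerivAt v v' s) :
    HasDerivAt (fun t => (M t)⁻¹ *ᵥ v t) ((M s)⁻¹ *ᵥ (v' - M' *ᵥ ((M s)⁻¹ *ᵥ v s))) s := by
  convert hasDerivAt_mulVec (hasDerivAt_nonsing_inv hM hs) hv using 1
  rw [mulVec_sub, neg_mulVec, mulVec_mulVec, mulVec_mulVec, sub_eq_neg_add, Matrix.mul_assoc]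

end MatrixCalculus

theorem transpose_nonsing_inv_mulVec_dotProduct {m R : Type*} [Fintype m] [DecidableEq m]
    [CommRing R] (M : Matrix m m R) (c v : m → R) :
    (Mᵀ⁻¹ *ᵥ c) ⬝ᵥ v = c ⬝ᵥ (M⁻¹ *ᵥ v) := by
  rw [← transpose_nonsing_inv, dotProduct_comm, dotProduct_transpose_mulVec]

section QuadraticBilinearSystem

variable {n : ℕ}

theorem dotProduct_mode2_mulVec_vkron (Q : Matrix (Fin n) (Fin n × Fin n) ℂ)
    (u v y : Fin n → ℂ) :
    u ⬝ᵥ (mode2 Q *ᵥ vkron v y) = y ⬝ᵥ (Q *ᵥ vkron v u) := by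
  simp only [dotProduct, mulVec, mode2, vkron, Fintype.sum_prod_type_right, Finset.mul_sum]
  rw [Finset.sum_comm]
  refine Finset.sum_congr rfl fun i _ => Finset.sum_congr rfl fun j _ =>
    Finset.sum_congr rfl fun k _ => ?_
  ring

theorem dotProduct_mulVec_vkron_add_smul_mulVec {Q : Matrix (Fin n) (Fin n × Fin n) ℂ}
    (hQ : QSymm Q) (N : Matrix (Fin n) (Fin n) ℂ) (u v y : Fin n → ℂ) :
    y ⬝ᵥ (Q *ᵥ vkron u v + (1/2 : ℂ) • (N *ᵥ u)) =
      u ⬝ᵥ (mode2 Q *ᵥ vkron v y + (1/2 : ℂ) • (Nᵀ *ᵥ y)) := by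
  rw [dotProduct_add, dotProduct_add, dotProduct_smul, dotProduct_smul, hQ,
    dotProduct_mode2_mulVec_vkron, dotProduct_transpose_mulVec]

theorem hasDerivAt_vkron_const {u : ℂ → Fin n → ℂ} {u' : Fin n → ℂ} {s : ℂ}
    (hu : HasDerivAt u u' s) (v : Fin n → ℂ) :
    HasDerivAt (fun t => vkron (u t) v) (vkron u' v) s :=
  hasDerivAt_pi.2 fun p => (hasDerivAt_pi.1 hu p.1).mul_const (v p.2)

theorem hasDerivAt_Gm (E A : Matrix (Fin n) (Fin n) ℂ) (s : ℂ) :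
    HasDerivAt (Gm E A) E s :=
  hasDerivAt_matrix_iff.2 fun i j => (hasDerivAt_mul_const (E i j)).sub_const (A i j)

theorem hasDerivAt_x1 {E A : Matrix (Fin n) (Fin n) ℂ} (B : Fin n → ℂ) {s : ℂ}
    (hs : IsUnit (Gm E A s)) :
    HasDerivAt (x1 E A B) (-((Gm E A s)⁻¹ *ᵥ (E *ᵥ x1 E A B s))) s := by
  rw [← mulVec_neg, ← zero_sub]
  exact hasDerivAt_nonsing_inv_mulVec (hasDerivAt_Gm E A s) hs (hasDerivAt_const s B)

theorem hasDerivAt_B2 {E A : Matrix (Fin n) (Fin n) ℂ} (N : Matrix (Fin n) (Fin n) ℂ)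
    (Q : Matrix (Fin n) (Fin n × Fin n) ℂ) {B x' : Fin n → ℂ} {s1 : ℂ} (s2 : ℂ)
    (hx : HasDerivAt (x1 E A B) x' s1) :
    HasDerivAt (fun s => B2 E A N Q B s s2)
      (Q *ᵥ vkron x' (x1 E A B s2) + (1/2 : ℂ) • (N *ᵥ x')) s1 :=
  (hasDerivAt_const_mulVec Q (hasDerivAt_vkron_const hx _)).add
    ((hasDerivAt_const_mulVec N (hx.add_const _)).const_smul (1/2 : ℂ))

theorem hasDerivAt_H2 {E A N : Matrix (Fin n) (Fin n) ℂ}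
    {Q : Matrix (Fin n) (Fin n × Fin n) ℂ} {B b' : Fin n → ℂ} (C : Fin n → ℂ) {s1 s2 : ℂ}
    (hs : IsUnit (Gm E A (s1 + s2)))
    (hb : HasDerivAt (fun s => B2 E A N Q B s s2) b' s1) :
    HasDerivAt (fun s => H2 E A N Q B C s s2)
      (y1 E A C (s1 + s2) ⬝ᵥ (b' - E *ᵥ x2 E A N Q B s1 s2)) s1 := by
  rw [y1, transpose_nonsing_inv_mulVec_dotProduct]
  have hG : HasDerivAt (fun s => Gm E A (s + s2)) E s1 :=
    hasDerivAt_matrix_iff.2 fun i j =>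
      (hasDerivAt_matrix_iff.1 (hasDerivAt_Gm E A (s1 + s2)) i j).comp_add_const s1 s2
  exact hasDerivAt_const_dotProduct C (hasDerivAt_nonsing_inv_mulVec hG hs hb)

theorem dotProduct_transpose_mulVec_y2 (E A N : Matrix (Fin n) (Fin n) ℂ)
    (Q : Matrix (Fin n) (Fin n × Fin n) ℂ) (B C x : Fin n → ℂ) (s1 s2 : ℂ) :
    x ⬝ᵥ (Eᵀ *ᵥ y2 E A N Q B C s1 s2) =
      ((Gm E A s1)⁻¹ *ᵥ (E *ᵥ x)) ⬝ᵥ C2 E A N Q B C s1 s2 := by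
  rw [dotProduct_transpose_mulVec, y2, transpose_nonsing_inv_mulVec_dotProduct, dotProduct_comm]

end QuadraticBilinearSystem

theorem H2_first_partial_formula {n : ℕ}
    (E A N : Matrix (Fin n) (Fin n) ℂ) (Q : Matrix (Fin n) (Fin n × Fin n) ℂ)
    (B C : Fin n → ℂ) (s1 s2 : ℂ)
    (hQ : QSymm Q)
    (hG1 : IsUnit (Gm E A s1)) (hG2 : IsUnit (Gm E A s2))
    (hG12 : IsUnit (Gm E A (s1 + s2))) :
    deriv (fun s => H2 E A N Q B C s s2) s1 =
      -(y1 E A C (s1 + s2) ⬝ᵥ (E *ᵥ x2 E A N Q B s1 s2)) -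
        (x1 E A B s1 ⬝ᵥ (Eᵀ *ᵥ y2 E A N Q B C s1 s2)) := by
  set y := y1 E A C (s1 + s2)
  set x := x1 E A B s1
  set d := (Gm E A s1)⁻¹ *ᵥ (E *ᵥ x)
  have hx1 : HasDerivAt (x1 E A B) (-d) s1 := hasDerivAt_x1 B hG1
  calc
    deriv (fun s => H2 E A N Q B C s s2) s1
      = y ⬝ᵥ (Q *ᵥ vkron (-d) (x1 E A B s2) + (1/2 : ℂ) • (N *ᵥ -d) -
          E *ᵥ x2 E A N Q B s1 s2) :=
        (hasDerivAt_H2 C hG12 (hasDerivAt_B2 N Q s2 hx1)).deriv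
    _ = -d ⬝ᵥ C2 E A N Q B C s1 s2 - y ⬝ᵥ (E *ᵥ x2 E A N Q B s1 s2) := by
        rw [dotProduct_sub, dotProduct_mulVec_vkron_add_smul_mulVec hQ, C2]
    _ = -(y ⬝ᵥ (E *ᵥ x2 E A N Q B s1 s2)) - x ⬝ᵥ (Eᵀ *ᵥ y2 E A N Q B C s1 s2) := by
        rw [dotProduct_transpose_mulVec_y2, neg_dotProduct]
        ring
end
end

section
/- (Petrov–Galerkin error representation.) Let σ : ℂ with G(σ) invertible and let V, W : Matrix (Fin n) (Fin r) ℂ. Let z : Fin r → ℂ satisfy the Petrov–Galerkin condition Wᵀ *ᵥ r_pr = 0, where r_pr = B - G(σ) *ᵥ (V *ᵥ z). Let z_du : Fin r → ℂ be arbitrary and set the dual residual r_du = -C - G(σ)ᵀ *ᵥ (W *ᵥ z_du). Then H1(σ) - C ⬝ᵥ (V *ᵥ z) = -(((G(σ)ᵀ)⁻¹ *ᵥ r_du) ⬝ᵥ r_pr). -/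
open Matrix
open scoped Kronecker

noncomputable section

/-! Inverting the two residual equations turns the residuals into the errors: `G⁻¹ r_pr` is the
primal error and `(Gᵀ)⁻¹ r_du` is the dual error. Moving `G⁻¹` across the dot product, the dual
error paired with `r_pr` is minus the output error, up to the pairing of the dual approximation with
`r_pr`. That last pairing vanishes by the Petrov–Galerkin condition, since the dual approximation
lies in the range of `W`. -/

/-- The residual `b - G x` of an approximate solution `x` of `G x = b`. It serves both the primal
equation and the dual one, `Gᵀ y = -c`, whose residual is `linearResidual Gᵀ (-c) y`. -/
def linearResidual {R l m : Type*} [NonUnitalNonAssocRing R] [Fintype m] (G : Matrix l m R)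
    (b : l → R) (x : m → R) : l → R :=
  b - G *ᵥ x

theorem mulVec_dotProduct_eq_zero_of_transpose_mulVec_eq_zero {R m k : Type*}
    [NonUnitalCommSemiring R] [Fintype m] [Fintype k] {W : Matrix m k R} {v : m → R}
    (hv : Wᵀ *ᵥ v = 0) (z : k → R) : (W *ᵥ z) ⬝ᵥ v = 0 := by
  rw [dotProduct_comm, ← dotProduct_transpose_mulVec, hv, dotProduct_zero]

section Invertible

variable {R m : Type*} [CommRing R] [Fintype m] [DecidableEq m]

theorem inv_transpose_mulVec_dotProduct (G : Matrix m m R) (c b : m → R) :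
    ((Gᵀ)⁻¹ *ᵥ c) ⬝ᵥ b = c ⬝ᵥ (G⁻¹ *ᵥ b) := by
  rw [← transpose_nonsing_inv, mulVec_transpose, dotProduct_mulVec]

variable {G : Matrix m m R}

theorem inv_mulVec_linearResidual (hG : IsUnit G) (b x : m → R) :
    G⁻¹ *ᵥ linearResidual G b x = G⁻¹ *ᵥ b - x := by
  have hdet : IsUnit G.det := (isUnit_iff_isUnit_det G).mp hG
  rw [linearResidual, mulVec_sub, mulVec_mulVec, nonsing_inv_mul G hdet, one_mulVec]

theorem output_error_eq_neg_dual_error_dotProduct_sub (hG : IsUnit G) (b c x y : m → R) :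
    c ⬝ᵥ (G⁻¹ *ᵥ b) - c ⬝ᵥ x =
      -(((Gᵀ)⁻¹ *ᵥ linearResidual Gᵀ (-c) y) ⬝ᵥ linearResidual G b x) -
        y ⬝ᵥ linearResidual G b x := by
  have dual_error : (Gᵀ)⁻¹ *ᵥ linearResidual Gᵀ (-c) y = -((Gᵀ)⁻¹ *ᵥ c) - y := by
    rw [inv_mulVec_linearResidual (G.isUnit_transpose.mpr hG), mulVec_neg]
  have output_error :
      ((Gᵀ)⁻¹ *ᵥ c) ⬝ᵥ linearResidual G b x = c ⬝ᵥ (G⁻¹ *ᵥ b) - c ⬝ᵥ x := by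
    rw [inv_transpose_mulVec_dotProduct, inv_mulVec_linearResidual hG, dotProduct_sub]
  rw [dual_error, sub_dotProduct, neg_dotProduct, output_error]
  ring

theorem petrov_galerkin_error_representation_general {k : Type*} [Fintype k] (hG : IsUnit G)
    {b x : m → R} {W : Matrix m k R} (hPG : Wᵀ *ᵥ linearResidual G b x = 0)
    (c : m → R) (z : k → R) :
    c ⬝ᵥ (G⁻¹ *ᵥ b) - c ⬝ᵥ x =
      -(((Gᵀ)⁻¹ *ᵥ linearResidual Gᵀ (-c) (W *ᵥ z)) ⬝ᵥ linearResidual G b x) := by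
  rw [output_error_eq_neg_dual_error_dotProduct_sub hG b c x (W *ᵥ z),
    mulVec_dotProduct_eq_zero_of_transpose_mulVec_eq_zero hPG, sub_zero]

end Invertible

theorem petrov_galerkin_error_representation {n r : ℕ}
    (E A : Matrix (Fin n) (Fin n) ℂ) (B C : Fin n → ℂ) (σ : ℂ)
    (hG : IsUnit (Gm E A σ))
    (V W : Matrix (Fin n) (Fin r) ℂ) (z zdu : Fin r → ℂ)
    (hPG : Wᵀ *ᵥ (B - Gm E A σ *ᵥ (V *ᵥ z)) = 0) :
    H1 E A B C σ - C ⬝ᵥ (V *ᵥ z) =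
      -((((Gm E A σ)ᵀ)⁻¹ *ᵥ (-C - (Gm E A σ)ᵀ *ᵥ (W *ᵥ zdu))) ⬝ᵥ
        (B - Gm E A σ *ᵥ (V *ᵥ z))) :=
  petrov_galerkin_error_representation_general hG hPG C zdu
end
end
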